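/- Let a ≥ 2 and n be integers with n > 2a + 1, and let ρ be a uniformly random permutation of {1,…,n−1}. Then the probability that D_{a,a−1}(ρ) = n is at most 3/(4(n−1)). -/

import Mathlib

/-!
Put `m = n - 1 = M + 1` and write `D(ρ) = ∑ c i * (ρ i + 1)` with `c i ∈ {1, -1, 0}` and
`∑ c i = 1`.

Cyclically shifting the values of `ρ` by one raises `D` by `1` modulo `m`, so at most `(m-1)!`
permutations satisfy `D ≡ 0 (mod m)`. Let `E₀` be the set of `ρ` with `D(ρ) = 0` and `E₁` the set
of `ρ` whose cyclic shift has `D = m + 1`. Both lie in `{D ≡ 0 (mod m)}`, and both have the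
cardinality to be bounded, because the reflection `v ↦ m + 1 - v` replaces `D` by `m + 1 - D`.
Since the shift changes `D` by exactly `1 - m * c i`, where `ρ i = m` is the top value, a member of
`E₀ ∩ E₁` has `D = 0` and its top value at a position `p` with `c p = -1`. It remains to show
`|E₀ ∩ E₁| ≤ (m-1)!/2`, hence (there are `a - 1` such `p`) that for each `p` at most
`(m-1)!/(2(a-1))` permutations satisfy `ρ p = m` and `D = 0` (`fixed_bound`).

For this, cycle the `M` lower values, keeping the top one fixed: `D` rises by `1 - c p = 2` modulo
`M`. If `M` is odd, `D` is equidistributed modulo `M` and `M ≥ 2a` suffices. If `M` is even, `D` is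
equidistributed modulo `M` within its parity class, and what is needed is that `D` is even
with probability only slightly above `1/2`. The bias is a correlation
`E ∏_{u ∈ U} (-1)^(ρ u)` with `|U| = 2(a-1)`; since the signs `(-1)^v` of the lower values sum to
zero, these correlations satisfy a recursion in `|U|` (`signSum_bound`), which bounds this one by
`1/(2a-1)`.
-/

/-- `D n a b σ = (σ(1)+⋯+σ(a)) − (σ(a+1)+⋯+σ(a+b))` for a permutation `σ` of `{1,…,n}`,
modelled as a permutation of `Fin n` with values `σ i + 1 ∈ {1,…,n}`. -/
def D (n a b : ℕ) (σ : Equiv.Perm (Fin n)) : ℤ :=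
  (∑ i ∈ Finset.univ.filter (fun i : Fin n => (i : ℕ) < a), ((σ i : ℕ) + 1 : ℤ))
    - ∑ i ∈ Finset.univ.filter (fun i : Fin n => a ≤ (i : ℕ) ∧ (i : ℕ) < a + b),
        ((σ i : ℕ) + 1 : ℤ)

open Finset

/-! ### Counting along orbits -/

/-- If the map `t` moves the residue of `f` modulo `N` by `c` at each step, and `0, c, …, (K-1)c`
are distinct modulo `N`, then `K` successive translates of a set on which `f` is constant
modulo `N` are disjoint. -/
lemma orbit_count {P : Type*} (X Q : Finset P) (t : P → P) (ht : Function.Injective t)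
    (f : P → ℤ) (c N : ℤ) (K : ℕ) (hXQ : X ⊆ Q)
    (hX : ∀ x ∈ X, ∀ y ∈ X, f x ≡ f y [ZMOD N])
    (hQ : ∀ x ∈ Q, t x ∈ Q ∧ f (t x) ≡ f x + c [ZMOD N])
    (hK : ∀ i < K, ∀ j < K, (i : ℤ) * c ≡ j * c [ZMOD N] → i = j) :
    K * X.card ≤ Q.card := by
  have key : ∀ (i : ℕ), ∀ x ∈ Q, t^[i] x ∈ Q ∧ f (t^[i] x) ≡ f x + i * c [ZMOD N] := by
    intro i
    induction i with
    | zero => intro x hx; simp [hx]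
    | succ k ih =>
      intro x hx
      obtain ⟨h1, h2⟩ := ih x hx
      obtain ⟨h3, h4⟩ := hQ _ h1
      rw [Function.iterate_succ_apply']
      refine ⟨h3, h4.trans ?_⟩
      have := h2.add_right c
      refine this.trans ?_
      push_cast
      rw [show f x + k * c + c = f x + (k + 1) * c by ring]
  have : (range K ×ˢ X).card ≤ Q.card := by
    apply Finset.card_le_card_of_injOn (fun q => t^[q.1] q.2)
    · rintro ⟨i, x⟩ h
      simp only [coe_product, Set.mem_prod, mem_coe] at h
      exact (key i x (hXQ h.2)).1
    · rintro ⟨i, x⟩ h ⟨j, y⟩ h' e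
      simp only [coe_product, Set.mem_prod, mem_coe, mem_range] at h h' e
      have e1 := (key i x (hXQ h.2)).2
      have e2 := (key j y (hXQ h'.2)).2
      rw [e] at e1
      have e3 := (hX x h.2 y h'.2)
      have e4 : f y + i * c ≡ f y + j * c [ZMOD N] :=
        ((e3.add_right (i * c)).symm.trans e1.symm).trans e2
      have hij := hK i h.1 j h'.1 (Int.ModEq.add_left_cancel' _ e4)
      subst hij
      rw [Prod.mk.injEq]
      exact ⟨rfl, ht.iterate i e⟩
  simpa using this

/-- The permutations taking the largest value at position `p`. -/
def topAt (M : ℕ) (p : Fin (M + 1)) : Finset (Equiv.Perm (Fin (M + 1))) :=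
  univ.filter (fun ρ => ρ p = Fin.last M)

lemma finRotate_val (M : ℕ) (v : Fin (M + 1)) :
    ((finRotate (M + 1) v : ℕ) : ℤ) = v + 1 - (M + 1) * (if v = Fin.last M then 1 else 0) := by
  rw [coe_finRotate]
  split_ifs <;> simp_all

lemma modEq_of_lt {N : ℤ} {i j K : ℕ} (hN : (K : ℤ) = N) (hi : i < K) (hj : j < K)
    (h : (i : ℤ) ≡ j [ZMOD N]) : i = j := by
  subst hN
  have := (Int.natCast_modEq_iff).1 h
  exact Nat.ModEq.eq_of_lt_of_lt this hi hj

lemma topAt_card (M : ℕ) (p : Fin (M + 1)) : (topAt M p).card ≤ M.factorial := by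
  have := orbit_count (topAt M p) univ (fun ρ => finRotate (M + 1) * ρ)
    (mul_right_injective _) (fun ρ => ((ρ p : ℕ) : ℤ)) 1 (M + 1) (M + 1) (subset_univ _)
    (by
      intro x hx y hy
      simp only [topAt, mem_filter] at hx hy
      rw [hx.2, hy.2])
    (by
      intro x _
      refine ⟨mem_univ _, ?_⟩
      rw [Equiv.Perm.mul_apply, finRotate_val]
      exact Int.modEq_iff_dvd.2 ⟨if x p = Fin.last M then 1 else 0, by ring⟩)
    (by
      intro i hi j hj h
      exact modEq_of_lt (by push_cast; rfl) hi hj (by simpa using h))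
  rw [card_univ, Fintype.card_perm, Fintype.card_fin, Nat.factorial_succ] at this
  exact Nat.le_of_mul_le_mul_left this (Nat.succ_pos _)

/-! ### Sign correlations of a random permutation -/

/-- The unnormalised correlation of the signs `(-1)^(ρ u)`, `u ∈ U`, over the permutations with
the top value at `p`. -/
def signSum (M : ℕ) (p : Fin (M + 1)) (U : Finset (Fin (M + 1))) : ℤ :=
  ∑ ρ ∈ topAt M p, ∏ u ∈ U, (-1 : ℤ) ^ (ρ u : ℕ)

lemma signSum_swap (M : ℕ) (p q q' : Fin (M + 1)) (V : Finset (Fin (M + 1)))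
    (hq : q ∉ V) (hq' : q' ∉ V) (hp : q ≠ p) (hp' : q' ≠ p) :
    signSum M p (insert q V) = signSum M p (insert q' V) := by
  unfold signSum
  refine Finset.sum_bij' (fun ρ _ => ρ * Equiv.swap q q') (fun ρ _ => ρ * Equiv.swap q q')
    ?_ ?_ ?_ ?_ ?_
  · intro ρ h
    simpa [topAt, Equiv.swap_apply_of_ne_of_ne hp.symm hp'.symm] using h
  · intro ρ h
    simpa [topAt, Equiv.swap_apply_of_ne_of_ne hp.symm hp'.symm] using h
  · intro ρ _; simp [mul_assoc]
  · intro ρ _; simp [mul_assoc]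
  · intro ρ _
    rw [prod_insert hq, prod_insert hq']
    congr 1
    · simp
    · refine prod_congr rfl fun u hu => ?_
      rw [Equiv.Perm.mul_apply, Equiv.swap_apply_of_ne_of_ne]
      · rintro rfl; exact hq hu
      · rintro rfl; exact hq' hu

lemma sum_signs (M : ℕ) (hM : Even M) (p : Fin (M + 1)) (ρ : Equiv.Perm (Fin (M + 1)))
    (h : ρ ∈ topAt M p) : ∑ q ∈ univ.erase p, (-1 : ℤ) ^ (ρ q : ℕ) = 0 := by
  simp only [topAt, mem_filter, mem_univ, true_and] at h
  have h1 : ∑ q, (-1 : ℤ) ^ (ρ q : ℕ) = 1 := by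
    rw [Equiv.sum_comp ρ (fun v => (-1 : ℤ) ^ (v : ℕ)),
      Fin.sum_univ_eq_sum_range (fun v => (-1 : ℤ) ^ v)]
    rw [neg_one_geom_sum, if_neg]
    simpa [Nat.even_add_one] using hM
  rw [← add_sum_erase univ _ (mem_univ p), h] at h1
  simpa [hM.neg_one_pow] using h1

/-- The recursion for correlations: expand `0 = ∑_q (-1)^(ρ q)` against the product over `V`. -/
lemma signSum_rec (M : ℕ) (hM : Even M) (p u : Fin (M + 1)) (V : Finset (Fin (M + 1)))
    (hu : u ∉ V) (hup : u ≠ p) (hp : p ∉ V) :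
    ((M : ℤ) - V.card) * signSum M p (insert u V) = - ∑ q ∈ V, signSum M p (V.erase q) := by
  have h0 : ∑ q ∈ univ.erase p,
      ∑ ρ ∈ topAt M p, (-1 : ℤ) ^ (ρ q : ℕ) * ∏ w ∈ V, (-1 : ℤ) ^ (ρ w : ℕ) = 0 := by
    rw [sum_comm]
    refine sum_eq_zero fun ρ h => ?_
    rw [← sum_mul, sum_signs M hM p ρ h, zero_mul]
  have hV : V ⊆ univ.erase p := fun x hx => by
    rw [mem_erase]
    exact ⟨fun e => hp (e ▸ hx), mem_univ _⟩
  rw [← sum_sdiff hV] at h0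
  have h1 : ∀ q ∈ V, ∑ ρ ∈ topAt M p, (-1 : ℤ) ^ (ρ q : ℕ) * ∏ w ∈ V, (-1 : ℤ) ^ (ρ w : ℕ)
      = signSum M p (V.erase q) := by
    intro q hq
    refine sum_congr rfl fun ρ _ => ?_
    rw [← mul_prod_erase V _ hq, ← mul_assoc, ← pow_add, Even.neg_one_pow ⟨_, rfl⟩, one_mul]
  have h2 : ∀ q ∈ univ.erase p \ V,
      ∑ ρ ∈ topAt M p, (-1 : ℤ) ^ (ρ q : ℕ) * ∏ w ∈ V, (-1 : ℤ) ^ (ρ w : ℕ)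
      = signSum M p (insert u V) := by
    intro q hq
    simp only [mem_sdiff, mem_erase, mem_univ, and_true] at hq
    rw [signSum_swap M p u q V hu hq.2 hup hq.1]
    refine sum_congr rfl fun ρ _ => ?_
    rw [prod_insert hq.2]
  rw [sum_congr rfl h1, sum_congr rfl h2, sum_const, card_sdiff_of_subset hV, nsmul_eq_mul,
    Nat.cast_sub (card_le_card hV), card_erase_of_mem (mem_univ _), card_univ,
    Fintype.card_fin, Nat.add_sub_cancel] at h0
  linarith

/-- A correlation of `2k` signs is at most `∏_{i<k} (2i+1)/(M-1-2i)` after normalisation. -/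
lemma signSum_bound (M : ℕ) (hM : Even M) (p : Fin (M + 1)) (k : ℕ) :
    ∀ U : Finset (Fin (M + 1)), p ∉ U → U.card = 2 * k → 2 * k ≤ M →
      |signSum M p U| * ∏ i ∈ range k, ((M : ℤ) - 1 - 2 * i)
        ≤ M.factorial * ∏ i ∈ range k, (2 * (i : ℤ) + 1) := by
  induction k with
  | zero =>
    intro U _ hU _
    have : U = ∅ := card_eq_zero.1 (by simpa using hU)
    subst this
    simpa [signSum] using topAt_card M p
  | succ k ih =>
    intro U hp hU hk
    obtain ⟨u, huU⟩ : U.Nonempty := card_pos.1 (by omega)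
    set V := U.erase u with hVdef
    have huV : u ∉ V := notMem_erase u U
    have hVc : V.card = 2 * k + 1 := by rw [hVdef, card_erase_of_mem huU]; omega
    have hUV : insert u V = U := insert_erase huU
    have hpV : p ∉ V := fun h => hp (mem_of_mem_erase h)
    have hr := signSum_rec M hM p u V huV (fun e => hp (e ▸ huU)) hpV
    rw [hUV, hVc] at hr
    have hpos : (0 : ℤ) ≤ ∏ i ∈ range k, ((M : ℤ) - 1 - 2 * i) := by
      refine prod_nonneg fun i hi => ?_
      rw [mem_range] at hi
      omega
    set P := ∏ i ∈ range k, ((M : ℤ) - 1 - 2 * i) with hP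
    have h1 : ((M : ℤ) - 1 - 2 * k) * |signSum M p U| ≤ ∑ q ∈ V, |signSum M p (V.erase q)| := by
      have hnn : (0 : ℤ) ≤ (M : ℤ) - 1 - 2 * k := by omega
      have : ((M : ℤ) - 1 - 2 * k) * |signSum M p U| = |∑ q ∈ V, signSum M p (V.erase q)| := by
        rw [← abs_neg (∑ q ∈ V, signSum M p (V.erase q)), ← hr, abs_mul,
          abs_of_nonneg (a := (M : ℤ) - (2 * k + 1 : ℕ)) (by push_cast; linarith)]
        push_cast
        ring
      rw [this]
      exact abs_sum_le_sum_abs _ _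
    have h2 : (∑ q ∈ V, |signSum M p (V.erase q)|) * P
        ≤ (2 * k + 1) * (M.factorial * ∏ i ∈ range k, (2 * (i : ℤ) + 1)) := by
      rw [sum_mul]
      have := sum_le_card_nsmul V (fun q => |signSum M p (V.erase q)| * P)
        (M.factorial * ∏ i ∈ range k, (2 * (i : ℤ) + 1)) (fun q hq =>
          ih (V.erase q) (fun h => hpV (mem_of_mem_erase h))
            (by rw [card_erase_of_mem hq]; omega) (by omega))
      rw [hVc, nsmul_eq_mul] at this
      push_cast at this
      exact this
    rw [prod_range_succ, prod_range_succ, ← hP]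
    have h3 := mul_le_mul_of_nonneg_right h1 hpos
    linarith

lemma prod_compare (M k : ℕ) (hk : 2 * k + 2 ≤ M) :
    (∏ i ∈ range k, (2 * (i : ℤ) + 1)) * (2 * k + 1)
      ≤ ∏ i ∈ range k, ((M : ℤ) - 1 - 2 * i) := by
  rw [← prod_range_succ (fun i : ℕ => 2 * (i : ℤ) + 1), prod_range_succ',
    ← prod_range_reflect (fun i : ℕ => (M : ℤ) - 1 - 2 * i)]
  simp only [Nat.cast_zero, mul_zero, zero_add, mul_one]
  refine prod_le_prod (fun i _ => by positivity) fun i hi => ?_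
  rw [mem_range] at hi
  omega

lemma signSum_small (M : ℕ) (hM : Even M) (p : Fin (M + 1)) (k : ℕ) (hk : 2 * k + 2 ≤ M)
    (U : Finset (Fin (M + 1))) (hp : p ∉ U) (hU : U.card = 2 * k) :
    (2 * (k : ℤ) + 1) * |signSum M p U| ≤ M.factorial := by
  have h1 := signSum_bound M hM p k U hp hU (by omega)
  have h2 := prod_compare M k hk
  have hQ : (0 : ℤ) < ∏ i ∈ range k, (2 * (i : ℤ) + 1) := prod_pos fun i _ => by positivity
  have h3 := mul_le_mul_of_nonneg_left h2 (abs_nonneg (signSum M p U))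
  refine le_of_mul_le_mul_left ?_ hQ
  linarith

/-! ### Effect of cyclic shifts on the statistic -/

/-- The coefficient of `ρ i + 1` in `D (M + 1) a (a - 1) ρ`. -/
def coef (M a : ℕ) (i : Fin (M + 1)) : ℤ :=
  (if (i : ℕ) < a then 1 else 0) - (if a ≤ (i : ℕ) ∧ (i : ℕ) < a + (a - 1) then 1 else 0)

lemma D_eq (M a : ℕ) (ρ : Equiv.Perm (Fin (M + 1))) :
    D (M + 1) a (a - 1) ρ = ∑ i, coef M a i * ((ρ i : ℕ) + 1) := by
  unfold D coef
  rw [sum_filter, sum_filter, ← sum_sub_distrib]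
  refine sum_congr rfl fun i _ => ?_
  split_ifs <;> ring

lemma card_filter_fin (M k : ℕ) (hk : k ≤ M + 1) :
    (univ.filter (fun i : Fin (M + 1) => (i : ℕ) < k)).card = k := by
  rw [Fin.card_filter_val_lt]
  omega

lemma card_minus (M a : ℕ) (ha : 1 ≤ a) (hM : 2 * a ≤ M) :
    (univ.filter (fun i : Fin (M + 1) => a ≤ (i : ℕ) ∧ (i : ℕ) < a + (a - 1))).card = a - 1 := by
  have : univ.filter (fun i : Fin (M + 1) => a ≤ (i : ℕ) ∧ (i : ℕ) < a + (a - 1)) =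
      univ.filter (fun i : Fin (M + 1) => (i : ℕ) < a + (a - 1)) \
      univ.filter (fun i : Fin (M + 1) => (i : ℕ) < a) := by
    ext i
    simp only [mem_filter, mem_univ, true_and, mem_sdiff, not_lt]
    tauto
  rw [this, card_sdiff_of_subset, card_filter_fin, card_filter_fin]
  · omega
  · omega
  · omega
  · intro i
    simp only [mem_filter, mem_univ, true_and]
    omega

lemma sum_coef (M a : ℕ) (ha : 1 ≤ a) (hM : 2 * a ≤ M) : ∑ i, coef M a i = 1 := by
  unfold coef
  rw [sum_sub_distrib, sum_boole, sum_boole, card_minus M a ha hM, card_filter_fin _ _ (by omega)]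
  push_cast [ha]
  ring

lemma D_rev (M a : ℕ) (ha : 1 ≤ a) (hM : 2 * a ≤ M) (ρ : Equiv.Perm (Fin (M + 1))) :
    D (M + 1) a (a - 1) (Fin.revPerm * ρ) = M + 2 - D (M + 1) a (a - 1) ρ := by
  rw [D_eq, D_eq, eq_sub_iff_add_eq, ← sum_add_distrib, ← mul_one ((M : ℤ) + 2),
    ← sum_coef M a ha hM, mul_sum]
  refine sum_congr rfl fun i _ => ?_
  have : ((Fin.rev (ρ i) : ℕ) : ℤ) = M - (ρ i : ℕ) := by
    rw [Fin.val_rev]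
    have := (ρ i).2
    omega
  rw [Equiv.Perm.mul_apply, Fin.revPerm_apply, this, sum_coef M a ha hM]
  ring

lemma D_rot (M a : ℕ) (ha : 1 ≤ a) (hM : 2 * a ≤ M) (ρ : Equiv.Perm (Fin (M + 1)))
    (p : Fin (M + 1)) (hp : ρ p = Fin.last M) :
    D (M + 1) a (a - 1) (finRotate (M + 1) * ρ)
      = D (M + 1) a (a - 1) ρ + 1 - (M + 1) * coef M a p := by
  have h1 : coef M a p = ∑ i, coef M a i * (if ρ i = Fin.last M then 1 else 0) := by
    simp [← hp]
  rw [h1, D_eq, D_eq, ← sum_coef M a ha hM, mul_sum, ← sum_add_distrib, ← sum_sub_distrib]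
  refine sum_congr rfl fun i _ => ?_
  rw [Equiv.Perm.mul_apply, finRotate_val, sum_coef M a ha hM]
  ring

/-- The permutation of the values fixing the top one and cycling all the others. -/
def lowRot (M : ℕ) : Equiv.Perm (Fin (M + 1)) := Equiv.swap 0 (Fin.last M) * finRotate (M + 1)

lemma lowRot_last (M : ℕ) : lowRot M (Fin.last M) = Fin.last M := by
  simp [lowRot]

lemma lowRot_val (M : ℕ) (v : Fin (M + 1)) :
    ((lowRot M v : ℕ) : ℤ) ≡ v + 1 - (if v = Fin.last M then 1 else 0) [ZMOD M] := by
  by_cases h : v = Fin.last M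
  · subst h
    rw [lowRot_last]
    simp [Int.ModEq]
  · rw [if_neg h]
    have h1 := finRotate_val M v
    rw [if_neg h] at h1
    rw [lowRot, Equiv.Perm.mul_apply]
    have h0 : finRotate (M + 1) v ≠ 0 := by
      intro e
      rw [e] at h1
      simp at h1
      omega
    by_cases h2 : finRotate (M + 1) v = Fin.last M
    · rw [h2, Equiv.swap_apply_right]
      rw [h2] at h1
      simp only [Fin.val_last, mul_zero, sub_zero] at h1
      rw [sub_zero, ← h1]
      simp [Int.ModEq]
    · rw [Equiv.swap_apply_of_ne_of_ne h0 h2, h1]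
      simp

lemma D_lowRot (M a : ℕ) (ha : 1 ≤ a) (hM : 2 * a ≤ M) (ρ : Equiv.Perm (Fin (M + 1)))
    (p : Fin (M + 1)) (hp : ρ p = Fin.last M) (hc : coef M a p = -1) :
    D (M + 1) a (a - 1) (lowRot M * ρ) ≡ D (M + 1) a (a - 1) ρ + 2 [ZMOD M] := by
  have h1 : coef M a p = ∑ i, coef M a i * (if ρ i = Fin.last M then 1 else 0) := by
    simp [← hp]
  have h2 : D (M + 1) a (a - 1) ρ + 2
      = ∑ i, coef M a i * (((ρ i : ℕ) + 1 - (if ρ i = Fin.last M then 1 else 0)) + 1) := by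
    have : (2 : ℤ) = ∑ i, coef M a i - coef M a p := by rw [sum_coef M a ha hM, hc]; norm_num
    rw [this, h1, D_eq, ← sum_sub_distrib, ← sum_add_distrib]
    exact sum_congr rfl fun i _ => by ring
  rw [h2, D_eq]
  refine Int.ModEq.sum fun i _ => ?_
  exact ((lowRot_val M (ρ i)).add_right 1).mul_left _

/-! ### Vanishing of the statistic when the top value has coefficient `-1` -/

/-- The positions with nonzero coefficient, other than `p`. -/
def others (M a : ℕ) (p : Fin (M + 1)) : Finset (Fin (M + 1)) :=
  (univ.filter (fun i : Fin (M + 1) => (i : ℕ) < a + (a - 1))).erase p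

lemma coef_eq_neg_one {M a : ℕ} {p : Fin (M + 1)} (hc : coef M a p = -1) :
    a ≤ (p : ℕ) ∧ (p : ℕ) < a + (a - 1) := by
  unfold coef at hc
  by_contra h
  rw [if_neg h] at hc
  split_ifs at hc <;> omega

/-- The sign of the parity of `D`, as a product of the signs `(-1)^(ρ u)`. -/
lemma neg_one_pow_D (M a : ℕ) (ha : 1 ≤ a) (hM : 2 * a ≤ M) (hev : Even M)
    (ρ : Equiv.Perm (Fin (M + 1)))
    (p : Fin (M + 1)) (hp : ρ p = Fin.last M) (hc : coef M a p = -1) :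
    (if Even (D (M + 1) a (a - 1) ρ) then (1 : ℤ) else -1)
      = - ∏ u ∈ others M a p, (-1 : ℤ) ^ (ρ u : ℕ) := by
  have hpS : p ∈ univ.filter (fun i : Fin (M + 1) => (i : ℕ) < a + (a - 1)) := by
    simpa using (coef_eq_neg_one hc).2
  -- Coefficients matter only modulo 2.
  have h1 : D (M + 1) a (a - 1) ρ ≡
      ((∑ i ∈ univ.filter (fun i : Fin (M + 1) => (i : ℕ) < a + (a - 1)), ((ρ i : ℕ) + 1) : ℕ) : ℤ)
      [ZMOD 2] := by
    rw [D_eq, sum_filter]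
    push_cast
    refine Int.ModEq.sum fun i _ => ?_
    unfold coef
    split_ifs <;> first | omega | (simp only [Int.ModEq]; push_cast; omega)
  have h2 : Even (D (M + 1) a (a - 1) ρ) ↔
      Even (∑ i ∈ univ.filter (fun i : Fin (M + 1) => (i : ℕ) < a + (a - 1)), ((ρ i : ℕ) + 1)) := by
    rw [← Int.even_coe_nat, Int.even_iff, Int.even_iff, h1.eq]
  have h3 : (if Even (D (M + 1) a (a - 1) ρ) then (1 : ℤ) else -1) =
      (-1) ^ (∑ i ∈ univ.filter (fun i : Fin (M + 1) => (i : ℕ) < a + (a - 1)),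
        ((ρ i : ℕ) + 1)) := by
    by_cases h : Even (D (M + 1) a (a - 1) ρ)
    · rw [if_pos h, (h2.1 h).neg_one_pow]
    · rw [if_neg h, (Nat.not_even_iff_odd.1 (fun h' => h (h2.2 h'))).neg_one_pow]
  rw [h3, sum_add_distrib, pow_add, ← prod_pow_eq_pow_sum, ← mul_prod_erase _ _ hpS, hp,
    Fin.val_last, hev.neg_one_pow, sum_const, card_filter_fin _ _ (by omega), smul_eq_mul, mul_one,
    Odd.neg_one_pow (⟨a - 1, by omega⟩ : Odd (a + (a - 1)))]
  simp [others]

/-- With the top value held at `p`, cycling the lower values moves `D` by `2` modulo `M`. For odd `M`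
this alone gives the bound; for even `M` it gives equidistribution among residues of one parity, and
`signSum_small` bounds the number of `ρ` with `D` even. -/
lemma fixed_bound (M a : ℕ) (ha : 2 ≤ a) (hM : 2 * a ≤ M) (p : Fin (M + 1))
    (hc : coef M a p = -1) :
    2 * (a - 1) * ((topAt M p).filter (fun ρ => D (M + 1) a (a - 1) ρ = 0)).card
      ≤ M.factorial := by
  set X := (topAt M p).filter (fun ρ => D (M + 1) a (a - 1) ρ = 0) with hX
  have hXc : ∀ x ∈ X, ∀ y ∈ X, D (M + 1) a (a - 1) x ≡ D (M + 1) a (a - 1) y [ZMOD M] := by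
    intro x hx y hy
    rw [hX, mem_filter] at hx hy
    rw [hx.2, hy.2]
  have hstep : ∀ x ∈ topAt M p, lowRot M * x ∈ topAt M p ∧
      D (M + 1) a (a - 1) (lowRot M * x) ≡ D (M + 1) a (a - 1) x + 2 [ZMOD M] := by
    intro x hx
    have hx' : x p = Fin.last M := by simpa [topAt] using hx
    refine ⟨?_, D_lowRot M a (by omega) hM x p hx' hc⟩
    simp [topAt, hx', lowRot_last]
  rcases Nat.even_or_odd M with hev | hodd
  · obtain ⟨h, hh⟩ := hev
    have hev : Even M := ⟨h, hh⟩
    set Q := (topAt M p).filter (fun ρ => Even (D (M + 1) a (a - 1) ρ)) with hQ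
    have h1 : h * X.card ≤ Q.card := by
      refine orbit_count X Q (fun ρ => lowRot M * ρ) (mul_right_injective _)
        (D (M + 1) a (a - 1)) 2 M h ?_ hXc ?_ ?_
      · intro x hx
        rw [hX, mem_filter] at hx
        rw [hQ, mem_filter, hx.2]
        exact ⟨hx.1, Even.zero⟩
      · intro x hx
        rw [hQ, mem_filter] at hx
        obtain ⟨h1, h2⟩ := hstep x hx.1
        refine ⟨?_, h2⟩
        rw [hQ, mem_filter]
        refine ⟨h1, ?_⟩
        have h3 := h2.of_dvd (show (2 : ℤ) ∣ M from ⟨h, by omega⟩)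
        rw [Int.even_iff, h3.eq, ← Int.even_iff]
        exact hx.2.add even_two
      · intro i hi j hj e
        have e' : (i * 2) = j * 2 := modEq_of_lt (K := M) rfl (by omega) (by omega)
          (by push_cast; exact e)
        omega
    have h2 : 2 * (Q.card : ℤ) = (topAt M p).card - signSum M p (others M a p) := by
      have : ∑ ρ ∈ topAt M p, (if Even (D (M + 1) a (a - 1) ρ) then (1 : ℤ) else -1)
          = - signSum M p (others M a p) := by
        rw [signSum, ← sum_neg_distrib]
        refine sum_congr rfl fun ρ hρ => ?_
        exact neg_one_pow_D M a (by omega) hM hev ρ p (by simpa [topAt] using hρ) hc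
      have h' : ∑ ρ ∈ topAt M p, (if Even (D (M + 1) a (a - 1) ρ) then (1 : ℤ) else -1)
          = 2 * (Q.card : ℤ) - (topAt M p).card := by
        rw [hQ, card_filter, card_eq_sum_ones (topAt M p)]
        push_cast
        rw [mul_sum, ← sum_sub_distrib]
        exact sum_congr rfl fun ρ _ => by split_ifs <;> norm_num
      linarith
    have hOc : (others M a p).card = 2 * (a - 1) := by
      rw [others, card_erase_of_mem (by simpa using (coef_eq_neg_one hc).2),
        card_filter_fin _ _ (by omega)]
      omega
    have h3 := signSum_small M hev p (a - 1) (by omega) (others M a p)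
      (notMem_erase _ _) hOc
    have h4 := neg_abs_le (signSum M p (others M a p))
    have h5 := topAt_card M p
    obtain ⟨j, rfl⟩ : ∃ j, a = j + 1 := ⟨a - 1, by omega⟩
    simp only [Nat.add_sub_cancel] at *
    zify at h1 h5 ⊢
    have h6 : (j : ℤ) + 1 ≤ h := by omega
    have hx0 : (0 : ℤ) ≤ X.card := by positivity
    have h7 : 2 * ((j : ℤ) + 1) * X.card ≤ M.factorial + |signSum M (p) (others M (j + 1) p)| := by
      nlinarith
    -- The factor `2j + 2` on the left cancels against `1 + 1/(2j+1) = (2j+2)/(2j+1)`.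
    have h8 : (2 * (j : ℤ) + 2) * ((2 * j + 1) * X.card) ≤ (2 * j + 2) * M.factorial := by
      have := mul_le_mul_of_nonneg_left h7 (show (0 : ℤ) ≤ 2 * j + 1 by positivity)
      linarith
    have h9 := le_of_mul_le_mul_left h8 (by positivity)
    linarith
  · have h1 : M * X.card ≤ (topAt M p).card := by
      refine orbit_count X (topAt M p) (fun ρ => lowRot M * ρ) (mul_right_injective _)
        (D (M + 1) a (a - 1)) 2 M M (filter_subset _ _) hXc hstep ?_
      intro i hi j hj e
      refine modEq_of_lt (K := M) rfl hi hj ?_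
      have hco : Int.gcd (M : ℤ) 2 = 1 := by
        have := (Nat.coprime_two_right (n := M)).2 hodd
        simpa [Int.gcd] using this
      have := Int.ModEq.cancel_right_div_gcd (by omega) e
      rwa [hco, Nat.cast_one, Int.ediv_one] at this
    have h2 := topAt_card M p
    have h3 : 2 * (a - 1) * X.card ≤ M * X.card := Nat.mul_le_mul_right _ (by omega)
    omega

/-! ### The bound -/

lemma count_bound (M a : ℕ) (ha : 2 ≤ a) (hM : 2 * a ≤ M) :
    4 * (univ.filter (fun ρ : Equiv.Perm (Fin (M + 1)) =>
      D (M + 1) a (a - 1) ρ = (M : ℤ) + 2)).card ≤ 3 * M.factorial := by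
  set X1 := univ.filter (fun ρ : Equiv.Perm (Fin (M + 1)) =>
    D (M + 1) a (a - 1) ρ = (M : ℤ) + 2) with hX1
  set E0 := univ.filter (fun ρ : Equiv.Perm (Fin (M + 1)) => D (M + 1) a (a - 1) ρ = 0) with hE0
  set E1 := univ.filter (fun ρ : Equiv.Perm (Fin (M + 1)) =>
    D (M + 1) a (a - 1) (finRotate (M + 1) * ρ) = (M : ℤ) + 2) with hE1
  set Y := univ.filter (fun ρ : Equiv.Perm (Fin (M + 1)) =>
    D (M + 1) a (a - 1) ρ ≡ 0 [ZMOD ((M : ℤ) + 1)]) with hY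
  set B := univ.filter (fun i : Fin (M + 1) => a ≤ (i : ℕ) ∧ (i : ℕ) < a + (a - 1)) with hB
  have htop : ∀ ρ : Equiv.Perm (Fin (M + 1)), ∃ p, ρ p = Fin.last M := fun ρ => ρ.surjective _
  have hrot : ∀ ρ : Equiv.Perm (Fin (M + 1)), D (M + 1) a (a - 1) (finRotate (M + 1) * ρ)
      ≡ D (M + 1) a (a - 1) ρ + 1 [ZMOD ((M : ℤ) + 1)] := by
    intro ρ
    obtain ⟨p, hp⟩ := htop ρ
    rw [D_rot M a (by omega) hM ρ p hp]
    exact Int.modEq_iff_dvd.2 ⟨coef M a p, by ring⟩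
  have c0 : X1.card = E0.card := by
    refine card_bij' (fun ρ _ => Fin.revPerm * ρ) (fun ρ _ => Fin.revPerm * ρ) ?_ ?_ ?_ ?_
    · intro ρ h
      simp only [hX1, hE0, mem_filter, mem_univ, true_and] at h ⊢
      rw [D_rev M a (by omega) hM, h]; ring
    · intro ρ h
      simp only [hX1, hE0, mem_filter, mem_univ, true_and] at h ⊢
      rw [D_rev M a (by omega) hM, h]; ring
    · intro ρ _; ext i; simp
    · intro ρ _; ext i; simp
  have c1 : X1.card = E1.card := by
    refine card_bij' (fun ρ _ => (finRotate (M + 1))⁻¹ * ρ) (fun ρ _ => finRotate (M + 1) * ρ)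
      ?_ ?_ ?_ ?_
    · intro ρ h
      simpa [hX1, hE1] using h
    · intro ρ h
      simpa [hX1, hE1] using h
    · intro ρ _; simp
    · intro ρ _; simp
  have cY : Y.card ≤ M.factorial := by
    have := orbit_count Y univ (fun ρ => finRotate (M + 1) * ρ) (mul_right_injective _)
      (D (M + 1) a (a - 1)) 1 (M + 1) (M + 1) (subset_univ _)
      (by
        intro x hx y hy
        simp only [hY, mem_filter, mem_univ, true_and] at hx hy
        exact hx.trans hy.symm)
      (fun x _ => ⟨mem_univ _, hrot x⟩)
      (by
        intro i hi j hj h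
        exact modEq_of_lt (by push_cast; rfl) hi hj (by simpa using h))
    rw [card_univ, Fintype.card_perm, Fintype.card_fin, Nat.factorial_succ] at this
    exact Nat.le_of_mul_le_mul_left this (Nat.succ_pos _)
  have hsub : E0 ∪ E1 ⊆ Y := by
    intro ρ h
    simp only [hE0, hE1, hY, mem_union, mem_filter, mem_univ, true_and] at h ⊢
    rcases h with h | h
    · rw [h]
    · have h1 := hrot ρ
      rw [h] at h1
      refine Int.ModEq.add_right_cancel' 1 (h1.symm.trans ?_)
      exact Int.modEq_iff_dvd.2 ⟨-1, by ring⟩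
  have hint : E0 ∩ E1 ⊆
      B.biUnion (fun p => (topAt M p).filter (fun ρ => D (M + 1) a (a - 1) ρ = 0)) := by
    intro ρ h
    simp only [hE0, hE1, mem_inter, mem_filter, mem_univ, true_and] at h
    obtain ⟨p, hp⟩ := htop ρ
    have h1 := h.2
    rw [D_rot M a (by omega) hM ρ p hp, h.1] at h1
    have hc : coef M a p = -1 := by
      have h2 : ((M : ℤ) + 1) * coef M a p = (M + 1) * (-1) := by linarith
      exact mul_left_cancel₀ (by positivity) h2
    rw [mem_biUnion]
    refine ⟨p, ?_, ?_⟩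
    · simpa [hB] using coef_eq_neg_one hc
    · simp [topAt, hp, h.1]
  have cI : 2 * (E0 ∩ E1).card ≤ M.factorial := by
    have h1 := (card_le_card hint).trans card_biUnion_le
    have h2 : 2 * (a - 1) * ∑ p ∈ B, ((topAt M p).filter
        (fun ρ => D (M + 1) a (a - 1) ρ = 0)).card ≤ (a - 1) * M.factorial := by
      rw [mul_sum, ← card_minus M a (by omega) hM, ← smul_eq_mul (α := ℕ) (_ : ℕ) M.factorial]
      refine sum_le_card_nsmul B _ _ fun p hp => ?_
      rw [card_minus M a (by omega) hM]
      refine fixed_bound M a ha hM p ?_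
      simp only [hB, mem_filter, mem_univ, true_and] at hp
      unfold coef
      rw [if_pos hp, if_neg (by omega)]
      norm_num
    have h3 : (a - 1) * (2 * (E0 ∩ E1).card) ≤ (a - 1) * M.factorial := by
      refine le_trans ?_ h2
      rw [← mul_assoc, mul_comm (a - 1) 2]
      exact Nat.mul_le_mul_left _ h1
    exact Nat.le_of_mul_le_mul_left h3 (by omega)
  have h1 := card_union_add_card_inter E0 E1
  have h2 := card_le_card hsub
  omega

/-- For `a ≥ 2` and `n > 2a + 1`, a uniformly random permutation `ρ` of `{1,…,n−1}`
satisfies `D_{a,a−1}(ρ) = n` with probability at most `3/(4(n−1))`. -/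
theorem prob_D_target_n (a n : ℕ) (ha : 2 ≤ a) (hn : 2 * a + 1 < n) :
    ((Finset.univ.filter
        (fun ρ : Equiv.Perm (Fin (n - 1)) => D (n - 1) a (a - 1) ρ = (n : ℤ))).card : ℚ)
      / (Nat.factorial (n - 1) : ℚ) ≤ 3 / (4 * ((n : ℚ) - 1)) := by
  obtain ⟨M, rfl⟩ : ∃ M, n = M + 2 := ⟨n - 2, by omega⟩
  have h := count_bound M a ha (by omega)
  have e : M + 2 - 1 = M + 1 := rfl
  rw [e]
  push_cast
  have hq : (4 : ℚ) * ((univ.filter (fun ρ : Equiv.Perm (Fin (M + 1)) =>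
      D (M + 1) a (a - 1) ρ = (M : ℤ) + 2)).card : ℚ) ≤ 3 * (M.factorial : ℚ) := by
    exact_mod_cast h
  have hf : (0 : ℚ) < (M.factorial : ℚ) := by exact_mod_cast M.factorial_pos
  have hM : (0 : ℚ) < (M : ℚ) + 1 := by positivity
  rw [Nat.factorial_succ]
  push_cast
  rw [show (M : ℚ) + 2 - 1 = M + 1 by ring, div_le_div_iff₀ (by positivity) (by positivity)]
  have := mul_le_mul_of_nonneg_right hq hM.le
  linarith
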